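/- Let h : ℝ → ℝ be nondecreasing and bi-Lipschitz with constants 0 < m ≤ M, let μ and ν be Borel probability measures on ℝ with finite first moments, and let π be any Borel probability measure on ℝ × ℝ whose first marginal is μ and whose second marginal is ν and such that (y, z) ↦ |y − z| is π-integrable. Then |Λ(μ) − Λ(ν)| ≤ |x*(μ) − x*(ν)| ≤ (M/m)·∫ |y − z| dπ(y, z); in particular Λ is (M/m)-Lipschitz with respect to the Wasserstein-1 distance. -/

import Mathlib

open MeasureTheory

/-- `Λ(μ) = inf {x ≥ 0 : ∫ h(x + y) dμ(y) ≥ 0}`, the reflection-in-law operator. -/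
noncomputable def LambdaRefl (h : ℝ → ℝ) (μ : Measure ℝ) : ℝ :=
  sInf {x : ℝ | 0 ≤ x ∧ 0 ≤ ∫ y, h (x + y) ∂μ}

theorem aux_integrable (h : ℝ → ℝ) (M : ℝ) (hmono : Monotone h)
    (hl : ∀ x y : ℝ, |h x - h y| ≤ M * |x - y|)
    (μ : Measure ℝ) [IsProbabilityMeasure μ] (hμ : Integrable (fun y : ℝ => y) μ) (x : ℝ) :
    Integrable (fun y => h (x + y)) μ := by
  have hg : Integrable (fun y : ℝ => |h x| + M * |y|) μ :=
    (integrable_const _).add (hμ.abs.const_mul M)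
  refine hg.mono' ?_ (Filter.Eventually.of_forall fun y => ?_)
  · exact (hmono.measurable.comp (measurable_const_add x)).aestronglyMeasurable
  · have h1 := hl (x + y) x
    have h2 : x + y - x = y := by ring
    rw [h2] at h1
    have h3 := abs_add_le (h (x + y) - h x) (h x)
    rw [sub_add_cancel] at h3
    rw [Real.norm_eq_abs]
    linarith

theorem aux_growth (h : ℝ → ℝ) (m M : ℝ) (hmono : Monotone h)
    (hbilip : ∀ x y : ℝ, m * |x - y| ≤ |h x - h y| ∧ |h x - h y| ≤ M * |x - y|)
    (μ : Measure ℝ) [IsProbabilityMeasure μ] (hμ : Integrable (fun y : ℝ => y) μ)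
    (a b : ℝ) (hab : a ≤ b) :
    m * (b - a) ≤ (∫ y, h (b + y) ∂μ) - ∫ y, h (a + y) ∂μ := by
  have ia := aux_integrable h M hmono (fun x y => (hbilip x y).2) μ hμ a
  have ib := aux_integrable h M hmono (fun x y => (hbilip x y).2) μ hμ b
  rw [← integral_sub ib ia]
  have : m * (b - a) = ∫ _y : ℝ, m * (b - a) ∂μ := by simp
  rw [this]
  refine integral_mono (integrable_const _) (ib.sub ia) fun y => ?_
  have h1 := (hbilip (b + y) (a + y)).1
  rw [abs_of_nonneg (by linarith : 0 ≤ b + y - (a + y)),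
    abs_of_nonneg (sub_nonneg.2 (hmono (by linarith : a + y ≤ b + y)))] at h1
  have h2 : b + y - (a + y) = b - a := by ring
  rw [h2] at h1
  exact h1

theorem aux_Lambda (h : ℝ → ℝ) (m M : ℝ) (hm : 0 < m) (hmono : Monotone h)
    (hbilip : ∀ x y : ℝ, m * |x - y| ≤ |h x - h y| ∧ |h x - h y| ≤ M * |x - y|)
    (μ : Measure ℝ) [IsProbabilityMeasure μ] (hμ : Integrable (fun y : ℝ => y) μ)
    (r : ℝ) (hr : (∫ y, h (r + y) ∂μ) = 0) : LambdaRefl h μ = max 0 r := by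
  have : {x : ℝ | 0 ≤ x ∧ 0 ≤ ∫ y, h (x + y) ∂μ} = Set.Ici (max 0 r) := by
    ext x
    simp only [Set.mem_setOf_eq, Set.mem_Ici, max_le_iff]
    refine and_congr_right fun _ => ⟨fun hx => ?_, fun hx => ?_⟩
    · by_contra hlt
      have hlt := not_le.1 hlt
      have := aux_growth h m M hmono hbilip μ hμ x r hlt.le
      have := mul_pos hm (sub_pos.2 hlt)
      linarith
    · have := aux_growth h m M hmono hbilip μ hμ r x hx
      have := mul_nonneg hm.le (sub_nonneg.2 hx)
      linarith
  rw [LambdaRefl, this, csInf_Ici]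

theorem LambdaRefl_wasserstein_lipschitz
    (h : ℝ → ℝ) (m M : ℝ) (hm : 0 < m) (hmM : m ≤ M)
    (hmono : Monotone h)
    (hbilip : ∀ x y : ℝ, m * |x - y| ≤ |h x - h y| ∧ |h x - h y| ≤ M * |x - y|)
    (μ ν : Measure ℝ) [IsProbabilityMeasure μ] [IsProbabilityMeasure ν]
    (hμ : Integrable (fun y : ℝ => y) μ) (hν : Integrable (fun y : ℝ => y) ν)
    (xμ xν : ℝ)
    (hrootμ : (∫ y, h (xμ + y) ∂μ) = 0) (hrootν : (∫ y, h (xν + y) ∂ν) = 0)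
    (π : Measure (ℝ × ℝ)) [IsProbabilityMeasure π]
    (hfst : π.map Prod.fst = μ) (hsnd : π.map Prod.snd = ν)
    (hπint : Integrable (fun p : ℝ × ℝ => |p.1 - p.2|) π) :
    |LambdaRefl h μ - LambdaRefl h ν| ≤ |xμ - xν| ∧
    |xμ - xν| ≤ (M / m) * ∫ p, |p.1 - p.2| ∂π := by
  refine ⟨?_, ?_⟩
  · rw [aux_Lambda h m M hm hmono hbilip μ hμ xμ hrootμ,
      aux_Lambda h m M hm hmono hbilip ν hν xν hrootν]
    simpa using abs_max_sub_max_le_max 0 xμ 0 xν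
  · have iμ := aux_integrable h M hmono (fun x y => (hbilip x y).2) μ hμ xν
    have iν := aux_integrable h M hmono (fun x y => (hbilip x y).2) ν hν xν
    have key : m * |xμ - xν| ≤ |(∫ y, h (xν + y) ∂μ)| := by
      rcases le_total xμ xν with hle | hle
      · have := aux_growth h m M hmono hbilip μ hμ xμ xν hle
        rw [abs_sub_comm, abs_of_nonneg (sub_nonneg.2 hle)]
        exact le_trans (by linarith) (le_abs_self _)
      · have := aux_growth h m M hmono hbilip μ hμ xν xμ hle
        rw [abs_of_nonneg (sub_nonneg.2 hle)]
        exact le_trans (by linarith) (neg_le_abs _)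
    have meas : Measurable (fun y => h (xν + y)) :=
      hmono.measurable.comp (measurable_const_add xν)
    have e1 : (∫ y, h (xν + y) ∂μ) = ∫ p, h (xν + p.1) ∂π := by
      rw [← hfst]
      exact integral_map measurable_fst.aemeasurable meas.aestronglyMeasurable
    have e2 : (∫ y, h (xν + y) ∂ν) = ∫ p, h (xν + p.2) ∂π := by
      rw [← hsnd]
      exact integral_map measurable_snd.aemeasurable meas.aestronglyMeasurable
    have i1 : Integrable (fun p : ℝ × ℝ => h (xν + p.1)) π := by
      rw [← hfst] at iμ
      exact iμ.comp_measurable measurable_fst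
    have i2 : Integrable (fun p : ℝ × ℝ => h (xν + p.2)) π := by
      rw [← hsnd] at iν
      exact iν.comp_measurable measurable_snd
    have bound : |(∫ y, h (xν + y) ∂μ)| ≤ M * ∫ p, |p.1 - p.2| ∂π := by
      have e3 : (∫ y, h (xν + y) ∂μ) = ∫ p, (h (xν + p.1) - h (xν + p.2)) ∂π := by
        rw [integral_sub i1 i2, ← e1, ← e2, hrootν, sub_zero]
      rw [e3, ← integral_const_mul]
      refine le_trans abs_integral_le_integral_abs ?_
      refine integral_mono (i1.sub i2).abs (hπint.const_mul M) fun p => ?_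
      have := (hbilip (xν + p.1) (xν + p.2)).2
      rwa [add_sub_add_left_eq_sub] at this
    rw [div_mul_eq_mul_div, le_div_iff₀ hm, mul_comm]
    exact key.trans bound
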